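/- For $d\in\mathbb N$ identify functions $f\colon[0,1]^d\to\mathbb C$ with $1$-periodic functions on $\mathbb R^d$, put $\hat f(k)=\int_{[0,1]^d} f(x)e^{-2\pi i\langle k,x\rangle}\,dx$ for $k\in\mathbb Z^d$, and let $$F_d^{\log}:=\Big\{f\in C([0,1]^d)\ \Big|\ \sum_{k\in\mathbb Z^d}|\hat f(k)|\max(1,\log\|k\|_\infty)\le 1\Big\},$$ where the functions are continuous as $1$-periodic functions and the weight of $k=0$ is $1$. A linear algorithm of rank at most $n$ is a $\mathbb C$-linear map $A_n\colon V\to L_2([0,1]^d)$ whose image has dimension at most $n$, where $V$ is any complex linear space of functions containing $F_d^{\log}$ (for example, the Wiener algebra of $1$-periodic functions with absolutely convergent Fourier series); its worst-case error is $\mathrm{err}(A_n):=\sup_{f\in F_d^{\log}}\|f-A_nf\|_{L_2}$. The problem of $L_2$-approximation on the classes $F_d^{\log}$ with linear algorithms suffers from the curse of dimensionality. That is, if $n(\varepsilon,d)$ denotes the least $n$ for which some linear algorithm of rank at most $n$ satisfies $\mathrm{err}(A_n)\le\varepsilon$ (and $n(\varepsilon,d)=\infty$ if there is none), then there are $C,\gamma,\varepsilon>0$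 such that $n(\varepsilon,d)\ge C(1+\gamma)^d$ for all $d\in\mathbb N$. Moreover, for every $d\in\mathbb N$ and every linear algorithm $A_n$ of rank at most $n$, where $n\le 5^d/2$, $$\sup_{f\in F_d^{\log}}\|f-A_nf\|_{L_2}\ \ge\ \frac1{\sqrt2}.$$ -/

import Mathlib

open MeasureTheory
open scoped ENNReal

noncomputable section

/-- The unit cube `[0,1]^d`. -/
def cube (d : ℕ) : Set (Fin d → ℝ) := Set.univ.pi fun _ => Set.Icc 0 1

/-- Lebesgue measure on the unit cube `[0,1]^d`. -/
def cubeMeasure (d : ℕ) : Measure (Fin d → ℝ) := volume.restrict (cube d)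

/-- The complex Hilbert space `L₂([0,1]^d)`. -/
abbrev L2Cube (d : ℕ) : Type := Lp ℂ 2 (cubeMeasure d)

/-- The Fourier coefficient `f̂(k) = ∫_{[0,1]^d} f(x) e^{-2πi⟨k,x⟩} dx`. -/
def fCoeff (d : ℕ) (f : (Fin d → ℝ) → ℂ) (k : Fin d → ℤ) : ℂ :=
  ∫ x, f x * Complex.exp (-(2 * Real.pi * Complex.I) * ∑ i, (k i : ℂ) * (x i : ℂ)) ∂(cubeMeasure d)

/-- `f` is 1-periodic in each coordinate. -/
def Periodic1 (d : ℕ) (f : (Fin d → ℝ) → ℂ) : Prop :=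
  ∀ (x : Fin d → ℝ) (i : Fin d), f (Function.update x i (x i + 1)) = f x

/-- The weight `max(1, log ‖k‖_∞)`. The norm on `Fin d → ℤ` is the maximum norm; for `k = 0` the
weight is `1`. -/
def logWeight (d : ℕ) (k : Fin d → ℤ) : ℝ :=
  max 1 (Real.log ‖k‖)

/-- The class `F_d^log` of continuous 1-periodic functions with
`∑_k |f̂(k)| max(1, log ‖k‖_∞) ≤ 1`. -/
def FdLog (d : ℕ) : Set ((Fin d → ℝ) → ℂ) :=
  {f | Continuous f ∧ Periodic1 d f ∧
    Summable (fun k : Fin d → ℤ => ‖fCoeff d f k‖ * logWeight d k) ∧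
    ∑' k : Fin d → ℤ, ‖fCoeff d f k‖ * logWeight d k ≤ 1}

/-- The worst-case error `sup_{f ∈ F_d^log} ‖f - A f‖_{L₂}` of a linear map `A` into `L₂([0,1]^d)`
that is defined on a linear space `V` of functions (used for `V` containing `F_d^log`). -/
def worstCaseError {d : ℕ} {V : Submodule ℂ ((Fin d → ℝ) → ℂ)} (A : V →ₗ[ℂ] L2Cube d) : ℝ≥0∞ :=
  ⨆ f : V, ⨆ _ : (f : (Fin d → ℝ) → ℂ) ∈ FdLog d,
    eLpNorm (fun x => (f : (Fin d → ℝ) → ℂ) x - A f x) 2 (cubeMeasure d)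

/-- The complexity of `L₂`-approximation on `F_d^log` with linear algorithms: the least `n` such
that some linear algorithm of rank at most `n` has worst-case error at most `ε`
(`⊤` if there is none). -/
def linComplexity (ε : ℝ) (d : ℕ) : ℕ∞ :=
  sInf {N : ℕ∞ | ∃ n : ℕ, N = n ∧
    ∃ (V : Submodule ℂ ((Fin d → ℝ) → ℂ)) (A : V →ₗ[ℂ] L2Cube d),
      FdLog d ⊆ V ∧ A.rank ≤ n ∧ worstCaseError A ≤ ENNReal.ofReal ε}

/-- The curse of dimensionality: for some `C, γ, ε > 0` the complexity `comp ε d` is at least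
`C (1+γ)^d` for all `d`. -/
def CurseOfDimensionality (comp : ℝ → ℕ → ℕ∞) : Prop :=
  ∃ C γ ε : ℝ, 0 < C ∧ 0 < γ ∧ 0 < ε ∧
    ∀ d : ℕ, ENNReal.ofReal (C * (1 + γ) ^ d) ≤ (comp ε d : ℝ≥0∞)

end

open MeasureTheory
open scoped ENNReal

noncomputable section

section Orthonormal

variable {𝕜 E ι : Type*} [RCLike 𝕜] [NormedAddCommGroup E] [InnerProductSpace 𝕜 E]

theorem norm_sq_sub_norm_sq_starProjection_le (W : Submodule 𝕜 E) [W.HasOrthogonalProjection]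
    (x : E) {y : E} (hy : y ∈ W) :
    ‖x‖ ^ 2 - ‖W.starProjection x‖ ^ 2 ≤ ‖x - y‖ ^ 2 := by
  have h1 := W.norm_sq_eq_add_norm_sq_starProjection x
  have h2 : ‖Wᗮ.starProjection x‖ ≤ ‖x - y‖ := by
    have h3 : Wᗮ.starProjection (x - y) = Wᗮ.starProjection x := by
      rw [map_sub, (Submodule.starProjection_apply_eq_zero_iff Wᗮ).2
        (W.le_orthogonal_orthogonal hy), sub_zero]
    rw [← h3]
    exact Wᗮ.norm_starProjection_apply_le (x - y)
  have h4 := pow_le_pow_left₀ (norm_nonneg _) h2 2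
  linarith

theorem Orthonormal.sum_norm_sq_starProjection_le {v : ι → E} (hv : Orthonormal 𝕜 v)
    (s : Finset ι) (W : Submodule 𝕜 E) [FiniteDimensional 𝕜 W] :
    ∑ i ∈ s, ‖W.starProjection (v i)‖ ^ 2 ≤ Module.finrank 𝕜 W := by
  let b := stdOrthonormalBasis 𝕜 W
  have key (i : ι) :
      ‖W.starProjection (v i)‖ ^ 2 = ∑ j, ‖inner 𝕜 (v i) (b j : E)‖ ^ 2 := by
    rw [Submodule.starProjection_apply, ← Submodule.coe_norm, ← b.sum_sq_norm_inner_right]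
    refine Finset.sum_congr rfl fun j _ => ?_
    rw [Submodule.inner_orthogonalProjectionOnto_eq_of_mem_left, norm_inner_symm]
  calc ∑ i ∈ s, ‖W.starProjection (v i)‖ ^ 2
      = ∑ j, ∑ i ∈ s, ‖inner 𝕜 (v i) (b j : E)‖ ^ 2 := by
        simp_rw [key]
        exact Finset.sum_comm
    _ ≤ ∑ _j : Fin (Module.finrank 𝕜 W), (1 : ℝ) := by
        refine Finset.sum_le_sum fun j _ => ?_
        refine (hv.sum_inner_products_le (b j : E)).trans ?_
        rw [← Submodule.coe_norm, b.orthonormal.1 j, one_pow]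
    _ = Module.finrank 𝕜 W := by simp

theorem Orthonormal.card_sub_finrank_le_sum_norm_sq_sub {v : ι → E} (hv : Orthonormal 𝕜 v)
    (s : Finset ι) (W : Submodule 𝕜 E) [FiniteDimensional 𝕜 W] {y : ι → E} (hy : ∀ i, y i ∈ W) :
    (s.card : ℝ) - Module.finrank 𝕜 W ≤ ∑ i ∈ s, ‖v i - y i‖ ^ 2 := by
  have h1 : ∑ i ∈ s, (‖v i‖ ^ 2 - ‖W.starProjection (v i)‖ ^ 2) ≤ ∑ i ∈ s, ‖v i - y i‖ ^ 2 :=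
    Finset.sum_le_sum fun i _ => norm_sq_sub_norm_sq_starProjection_le W (v i) (hy i)
  have h2 := hv.sum_norm_sq_starProjection_le s W
  simp only [Finset.sum_sub_distrib, hv.1, one_pow, Finset.sum_const, nsmul_eq_mul, mul_one] at h1
  linarith

/-- Among at least `2n` orthonormal vectors, one is at distance at least `1/√2` from its
approximation in a subspace of dimension at most `n`. -/
theorem Orthonormal.exists_half_le_norm_sq_sub {v : ι → E} (hv : Orthonormal 𝕜 v)
    {s : Finset ι} (hs : s.Nonempty) (W : Submodule 𝕜 E) [FiniteDimensional 𝕜 W]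
    (hW : (Module.finrank 𝕜 W : ℝ) ≤ s.card / 2) {y : ι → E} (hy : ∀ i, y i ∈ W) :
    ∃ i ∈ s, 1 / 2 ≤ ‖v i - y i‖ ^ 2 := by
  have h := hv.card_sub_finrank_le_sum_norm_sq_sub s W hy
  refine Finset.exists_le_of_sum_le hs (f := fun _ => (1 / 2 : ℝ)) ?_
  rw [Finset.sum_const, nsmul_eq_mul]
  linarith

end Orthonormal

section Exponentials

variable {d : ℕ}

/-- The trigonometric monomial `x ↦ e^{2πi⟨k,x⟩}`. -/
def cubeExp (k : Fin d → ℤ) (x : Fin d → ℝ) : ℂ :=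
  Complex.exp (2 * Real.pi * Complex.I * ∑ i, (k i : ℂ) * (x i : ℂ))

theorem cubeExp_add (k l : Fin d → ℤ) (x : Fin d → ℝ) :
    cubeExp (k + l) x = cubeExp k x * cubeExp l x := by
  simp only [cubeExp, ← Complex.exp_add, ← mul_add, ← Finset.sum_add_distrib, Pi.add_apply,
    Int.cast_add, add_mul]

theorem cubeExp_neg (k : Fin d → ℤ) (x : Fin d → ℝ) :
    cubeExp (-k) x =
      Complex.exp (-(2 * Real.pi * Complex.I) * ∑ i, (k i : ℂ) * (x i : ℂ)) := by
  simp [cubeExp]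

theorem conj_cubeExp (k : Fin d → ℤ) (x : Fin d → ℝ) :
    (starRingEnd ℂ) (cubeExp k x) = cubeExp (-k) x := by
  rw [cubeExp_neg, cubeExp, ← Complex.exp_conj]
  simp [Complex.conj_ofNat]

theorem norm_cubeExp (k : Fin d → ℤ) (x : Fin d → ℝ) : ‖cubeExp k x‖ = 1 := by
  have h : (2 * Real.pi * Complex.I * ∑ i, (k i : ℂ) * (x i : ℂ)) =
      ((2 * Real.pi * ∑ i, (k i : ℝ) * x i : ℝ) : ℂ) * Complex.I := by
    push_cast
    ring
  rw [cubeExp, h, Complex.norm_exp_ofReal_mul_I]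

theorem continuous_cubeExp (k : Fin d → ℤ) : Continuous (cubeExp k) := by
  unfold cubeExp
  fun_prop

theorem periodic1_cubeExp (k : Fin d → ℤ) : Periodic1 d (cubeExp k) := by
  intro x i
  have h : ∑ j, (k j : ℂ) * (Function.update x i (x i + 1) j : ℂ) =
      ∑ j, (k j : ℂ) * (x j : ℂ) + k i := by
    rw [← Finset.add_sum_erase _ _ (Finset.mem_univ i),
      ← Finset.add_sum_erase _ (fun j => (k j : ℂ) * (x j : ℂ)) (Finset.mem_univ i),
      Finset.sum_congr rfl fun j hj => by rw [Function.update_of_ne (Finset.ne_of_mem_erase hj)]]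
    simp only [Function.update_self]
    push_cast
    ring
  rw [cubeExp, h, mul_add, Complex.exp_add, mul_comm _ (k i : ℂ), Complex.exp_int_mul_two_pi_mul_I,
    mul_one, cubeExp]

theorem integral_exp_two_pi_int_mul (m : ℤ) :
    ∫ t in Set.Icc (0 : ℝ) 1, Complex.exp (2 * Real.pi * Complex.I * (m * t)) =
      if m = 0 then 1 else 0 := by
  rw [integral_Icc_eq_integral_Ioc, ← intervalIntegral.integral_of_le zero_le_one]
  split_ifs with hm
  · simp [hm]
  · have hc : 2 * Real.pi * Complex.I * m ≠ 0 :=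
      mul_ne_zero Complex.two_pi_I_ne_zero (Int.cast_ne_zero.2 hm)
    simp_rw [← mul_assoc]
    rw [integral_exp_mul_complex hc, Complex.ofReal_one, mul_one, mul_comm _ (m : ℂ),
      Complex.exp_int_mul_two_pi_mul_I]
    simp

theorem cubeMeasure_eq_pi (d : ℕ) :
    cubeMeasure d = Measure.pi fun _ => volume.restrict (Set.Icc (0 : ℝ) 1) := by
  rw [cubeMeasure, cube, volume_pi, Measure.restrict_pi_pi]

instance isProbabilityMeasure_cubeMeasure (d : ℕ) : IsProbabilityMeasure (cubeMeasure d) := by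
  have : IsProbabilityMeasure (volume.restrict (Set.Icc (0 : ℝ) 1)) := ⟨by simp⟩
  rw [cubeMeasure_eq_pi]
  infer_instance

theorem integral_cubeExp (k : Fin d → ℤ) :
    ∫ x, cubeExp k x ∂(cubeMeasure d) = if k = 0 then 1 else 0 := by
  simp_rw [cubeExp, Finset.mul_sum, Complex.exp_sum]
  rw [cubeMeasure_eq_pi, integral_fintype_prod_eq_prod
    (fun i (t : ℝ) => Complex.exp (2 * Real.pi * Complex.I * (k i * t)))]
  simp_rw [integral_exp_two_pi_int_mul, Finset.prod_ite_zero, Finset.prod_const_one, funext_iff]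
  simp

theorem fCoeff_cubeExp (k l : Fin d → ℤ) :
    fCoeff d (cubeExp k) l = if l = k then 1 else 0 := by
  simp_rw [fCoeff, ← cubeExp_neg, ← cubeExp_add, integral_cubeExp, ← sub_eq_add_neg, sub_eq_zero,
    eq_comm]

theorem logWeight_eq_one {k : Fin d → ℤ} (hk : ‖k‖ ≤ 2) : logWeight d k = 1 := by
  refine max_eq_left ?_
  rcases (norm_nonneg k).eq_or_lt with h | h
  · simp [← h]
  · exact (Real.log_le_sub_one_of_pos h).trans (by linarith)

theorem cubeExp_mem_FdLog {k : Fin d → ℤ} (hk : ‖k‖ ≤ 2) : cubeExp k ∈ FdLog d := by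
  have h : HasSum (fun l => ‖fCoeff d (cubeExp k) l‖ * logWeight d l) 1 := by
    have := hasSum_single (f := fun l => ‖fCoeff d (cubeExp k) l‖ * logWeight d l) k
      (fun l hl => by simp [fCoeff_cubeExp, hl])
    simpa [fCoeff_cubeExp, logWeight_eq_one hk] using this
  exact ⟨continuous_cubeExp k, periodic1_cubeExp k, h.summable, h.tsum_eq.le⟩

theorem memLp_cubeExp (k : Fin d → ℤ) : MemLp (cubeExp k) 2 (cubeMeasure d) :=
  MemLp.of_bound (continuous_cubeExp k).aestronglyMeasurable 1
    (Filter.Eventually.of_forall fun x => (norm_cubeExp k x).le)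

theorem orthonormal_cubeExp :
    Orthonormal ℂ fun k : Fin d → ℤ => (memLp_cubeExp k).toLp (cubeExp k) := by
  rw [orthonormal_iff_ite]
  intro k l
  rw [L2.inner_def]
  have h : ∫ x, inner ℂ ((memLp_cubeExp k).toLp (cubeExp k) x)
      ((memLp_cubeExp l).toLp (cubeExp l) x) ∂(cubeMeasure d) =
      ∫ x, cubeExp (l + -k) x ∂(cubeMeasure d) := by
    refine integral_congr_ae ?_
    filter_upwards [(memLp_cubeExp k).coeFn_toLp, (memLp_cubeExp l).coeFn_toLp] with x hk hl
    rw [hk, hl, RCLike.inner_apply, conj_cubeExp, cubeExp_add]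
  rw [h, integral_cubeExp]
  simp_rw [← sub_eq_add_neg, sub_eq_zero, eq_comm]

/-- The integer vectors of maximum norm at most `2`. -/
def smallFrequencies (d : ℕ) : Finset (Fin d → ℤ) := Fintype.piFinset fun _ => Finset.Icc (-2) 2

theorem card_smallFrequencies (d : ℕ) : (smallFrequencies d).card = 5 ^ d := by
  rw [smallFrequencies, Fintype.card_piFinset_const]
  rfl

theorem norm_le_two_of_mem_smallFrequencies {k : Fin d → ℤ} (hk : k ∈ smallFrequencies d) :
    ‖k‖ ≤ 2 := by
  refine (pi_norm_le_iff_of_nonneg zero_le_two).2 fun i => ?_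
  have h := Finset.mem_Icc.1 (Fintype.mem_piFinset.1 hk i)
  rw [Int.norm_eq_abs]
  exact_mod_cast abs_le.2 h

end Exponentials

theorem ofReal_le_worstCaseError {d n : ℕ} (hn : (n : ℝ) ≤ 5 ^ d / 2)
    {V : Submodule ℂ ((Fin d → ℝ) → ℂ)} (hV : FdLog d ⊆ V) (A : V →ₗ[ℂ] L2Cube d)
    (hA : A.rank ≤ n) : ENNReal.ofReal (1 / Real.sqrt 2) ≤ worstCaseError A := by
  classical
  have hfin : FiniteDimensional ℂ (LinearMap.range A) :=
    Module.rank_lt_aleph0_iff.1 (hA.trans_lt Cardinal.natCast_lt_aleph0)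
  have hrank : Module.finrank ℂ (LinearMap.range A) ≤ n := Module.finrank_le_of_rank_le hA
  let y (k : Fin d → ℤ) : L2Cube d := if h : cubeExp k ∈ V then A ⟨cubeExp k, h⟩ else 0
  have hy (k) : y k ∈ LinearMap.range A := by
    simp only [y]
    split_ifs
    exacts [LinearMap.mem_range_self A _, zero_mem _]
  have hcard : ((smallFrequencies d).card : ℝ) = 5 ^ d := by
    rw [card_smallFrequencies]
    norm_num
  obtain ⟨k, hk, hle⟩ := orthonormal_cubeExp.exists_half_le_norm_sq_sub
    (s := smallFrequencies d) (Finset.card_pos.1 (by rw [card_smallFrequencies]; positivity))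
    (LinearMap.range A) (by rw [hcard]; exact le_trans (mod_cast hrank) hn) hy
  have hF := cubeExp_mem_FdLog (norm_le_two_of_mem_smallFrequencies hk)
  have hyk : y k = A ⟨cubeExp k, hV hF⟩ := dif_pos (hV hF)
  refine le_trans ?_ (le_iSup₂ (f := fun (f : V) (_ : (f : (Fin d → ℝ) → ℂ) ∈ FdLog d) =>
    eLpNorm (fun x => (f : (Fin d → ℝ) → ℂ) x - A f x) 2 (cubeMeasure d)) ⟨cubeExp k, hV hF⟩ hF)
  have hnorm : eLpNorm (fun x => cubeExp k x - A ⟨cubeExp k, hV hF⟩ x) 2 (cubeMeasure d) =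
      ‖(memLp_cubeExp k).toLp (cubeExp k) - y k‖ₑ := by
    rw [Lp.enorm_def, hyk]
    refine eLpNorm_congr_ae ?_
    filter_upwards [Lp.coeFn_sub ((memLp_cubeExp k).toLp (cubeExp k)) (A ⟨cubeExp k, hV hF⟩),
      (memLp_cubeExp k).coeFn_toLp] with x h1 h2
    rw [h1, Pi.sub_apply, h2]
  rw [hnorm, ← ofReal_norm]
  refine ENNReal.ofReal_le_ofReal ((sq_le_sq₀ (by positivity) (norm_nonneg _)).1 ?_)
  rwa [div_pow, one_pow, Real.sq_sqrt zero_le_two]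

theorem curseOfDimensionality_linComplexity : CurseOfDimensionality linComplexity := by
  refine ⟨1 / 2, 4, 1 / 2, by norm_num, by norm_num, by norm_num, fun d => ?_⟩
  rcases Set.eq_empty_or_nonempty {N : ℕ∞ | ∃ n : ℕ, N = n ∧
    ∃ (V : Submodule ℂ ((Fin d → ℝ) → ℂ)) (A : V →ₗ[ℂ] L2Cube d),
      FdLog d ⊆ V ∧ A.rank ≤ n ∧ worstCaseError A ≤ ENNReal.ofReal (1 / 2)} with hempty | hne
  · rw [linComplexity, hempty, sInf_empty, ENat.toENNReal_top]
    exact le_top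
  obtain ⟨n, hn, V, A, hV, hA, herr⟩ := csInf_mem hne
  have hn' : linComplexity (1 / 2) d = n := hn
  have hlt : (5 : ℝ) ^ d / 2 < n := by
    by_contra! h
    have h1 := (ENNReal.ofReal_le_ofReal_iff (by norm_num)).1
      ((ofReal_le_worstCaseError h hV A hA).trans herr)
    rw [div_le_div_iff₀ (by positivity) (by norm_num)] at h1
    nlinarith [Real.sq_sqrt (zero_le_two (α := ℝ)), Real.sqrt_nonneg 2]
  rw [hn', ENat.toENNReal_coe, ← ENNReal.ofReal_natCast]
  refine ENNReal.ofReal_le_ofReal ?_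
  norm_num at hlt ⊢
  linarith

end

/-- `L₂`-approximation on `F_d^log` with linear algorithms suffers from the curse of dimensionality;
any linear map of rank at most `n ≤ 5^d/2` into `L₂([0,1]^d)`, defined on any linear space containing
`F_d^log`, has worst-case error at least `1/√2`. -/
theorem statement10 :
    CurseOfDimensionality linComplexity ∧
    ∀ (d n : ℕ), (n : ℝ) ≤ 5 ^ d / 2 →
      ∀ (V : Submodule ℂ ((Fin d → ℝ) → ℂ)), FdLog d ⊆ V →
        ∀ A : V →ₗ[ℂ] L2Cube d, A.rank ≤ n →
          ENNReal.ofReal (1 / Real.sqrt 2) ≤ worstCaseError A := by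
  exact ⟨curseOfDimensionality_linComplexity, fun _ _ hn _ hV A hA =>
    ofReal_le_worstCaseError hn hV A hA⟩
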